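/- (Sufficiency part of Theorem 1.) Let L be a graph Laplacian such that G(L) has a spanning tree, and let g : ℝ → ℝ be strictly increasing with only finitely many discontinuity points in every bounded interval. Let ξ : Fin n → ℝ satisfy ∑ i, ξ i * L i j = 0 for every j and ∑ i, ξ i = 1. Then every Filippov solution (x, γ) of the protocol ẋ_i = -∑_j L i j g(x_j) with initial value x0 achieves consensus: for every i, x t i converges as t → ∞ to the value c = ∑ i, ξ i * x0 i. -/

import Mathlib

open MeasureTheory Function Filter

/-!
For a level `θ` compare the overshoots `v_i = (x_i - θ)⁺` with the excesses `u_j = (γ_j - g(θ+))⁺`,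
where `u_j = 0` whenever `x_j ≤ θ`. Because `L` is a graph Laplacian, `v̇ ≤ -L u`, and the
inequality in row `i` even has the slack `-L i j * u_j` at the times when `x_i ≤ θ < x_j`.

If `ξ` is a left null vector of `L`, then so is `|ξ|`, and `|ξ| ⬝ᵥ v` decreases. Hence the slack of
every row in the support of `ξ` is integrable over time. As the solutions are bounded and
Lipschitz, no level can separate the two ends of an edge into the support for arbitrarily late
times, so all vertices in the support of `ξ` approach the root. The conserved quantity `ξ ⬝ᵥ x`
then identifies the limit of the root.

The remaining vertices follow the root: if `L U ≤ C` in every row, then every `U j` is at most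
`U r + K * C` with `K` depending only on `L`. For the time integral `U` of `u`, and a level `θ` that
the root eventually stays below, this bounds `U`, so no vertex can reach a higher level at
arbitrarily late times. The same estimate with `C = 0` shows that solutions never exceed their
initial maximum. Lower bounds come from the symmetry `x ↦ -x`, `g ↦ -g (-·)`.
-/

open Set Topology Matrix
open scoped NNReal

section Analysis

theorem absolutelyContinuousOnInterval_comp_of_lipschitzWith {X Y : Type*}
    [PseudoMetricSpace X] [PseudoMetricSpace Y] {φ : X → Y} {K : ℝ≥0} (hφ : LipschitzWith K φ)
    {F : ℝ → X} {a b : ℝ} (hF : AbsolutelyContinuousOnInterval F a b) :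
    AbsolutelyContinuousOnInterval (φ ∘ F) a b := by
  have hKF := Tendsto.const_mul (K : ℝ) hF
  rw [mul_zero] at hKF
  refine squeeze_zero (fun _ => Finset.sum_nonneg fun _ _ => dist_nonneg) (fun E => ?_) hKF
  rw [Finset.mul_sum]
  exact Finset.sum_le_sum fun _ _ => hφ.dist_le_mul _ _

theorem deriv_posPart_of_continuousAt {F : ℝ → ℝ} {t : ℝ} (hF : ContinuousAt F t) :
    deriv (fun s => (F s)⁺) t = {s | 0 < F s}.indicator (deriv F) t := by
  by_cases hpos : 0 < F t
  · have heq : (fun s => (F s)⁺) =ᶠ[𝓝 t] F := by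
      filter_upwards [hF.eventually (lt_mem_nhds hpos)] with s hs using posPart_of_nonneg hs.le
    rw [heq.deriv_eq, indicator_of_mem (by exact hpos)]
  · have hmin : IsLocalMin (fun s => (F s)⁺) t := Eventually.of_forall fun s => by
      simp only [posPart_of_nonpos (not_lt.mp hpos), posPart_nonneg]
    rw [hmin.deriv_eq_zero, indicator_of_notMem (by exact hpos)]

theorem posPart_sub_posPart_eq_integral_indicator {F f : ℝ → ℝ} {a b : ℝ} (hab : a ≤ b)
    (hf : IntervalIntegrable f volume a b)
    (hF : ∀ t ∈ Icc a b, F t = F a + ∫ s in a..t, f s) :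
    (F b)⁺ - (F a)⁺ = ∫ s in a..b, {s | 0 < F s}.indicator f s := by
  set G : ℝ → ℝ := fun t => F a + ∫ s in a..t, f s
  have hG : AbsolutelyContinuousOnInterval (fun t => (G t)⁺) a b :=
    absolutelyContinuousOnInterval_comp_of_lipschitzWith lipschitzWith_posPart
      ((LipschitzWith.const (F a)).lipschitzOnWith.absolutelyContinuousOnInterval.add
        (hf.absolutelyContinuousOnInterval_intervalIntegral left_mem_uIcc))
  have hFG : ∀ t ∈ Icc a b, F t = G t := hF
  rw [hFG b (right_mem_Icc.mpr hab), hFG a (left_mem_Icc.mpr hab), ← hG.integral_deriv_eq_sub]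
  refine intervalIntegral.integral_congr_ae ?_
  filter_upwards [hf.ae_hasDerivAt_integral] with t ht htab
  have hGt : HasDerivAt G (f t) t :=
    (ht (uIoc_subset_uIcc htab) a left_mem_uIcc).const_add (F a)
  rw [deriv_posPart_of_continuousAt hGt.continuousAt]
  simp only [indicator, mem_ofPred_eq, hGt.deriv,
    hFG t (uIcc_of_le hab ▸ uIoc_subset_uIcc htab)]

theorem locallyIntegrable_comp_of_lipschitzWith {X E E' : Type*} [TopologicalSpace X]
    [SecondCountableTopology X] [MeasurableSpace X] {μ : Measure X} [IsLocallyFiniteMeasure μ]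
    [NormedAddCommGroup E] [NormedAddCommGroup E'] {φ : E → E'} {K : ℝ≥0}
    (hφ : LipschitzWith K φ) {f : X → E} (hf : LocallyIntegrable f μ) :
    LocallyIntegrable (fun t => φ (f t)) μ := by
  have hnorm : LocallyIntegrable (fun t => ‖f t‖) μ :=
    hf.mono hf.aestronglyMeasurable.norm (Eventually.of_forall fun t => (norm_norm (f t)).le)
  have hbound : LocallyIntegrable (fun t => K * ‖f t‖ + ‖φ 0‖) μ :=
    (hnorm.smul (K : ℝ)).add (locallyIntegrable_const _)
  refine hbound.mono (hφ.continuous.comp_aestronglyMeasurable hf.aestronglyMeasurable)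
    (Eventually.of_forall fun t => ?_)
  calc ‖φ (f t)‖ ≤ ‖φ (f t) - φ 0‖ + ‖φ 0‖ := norm_le_norm_sub_add _ _
    _ ≤ K * ‖f t‖ + ‖φ 0‖ := by simpa using hφ.norm_sub_le (f t) 0
    _ ≤ ‖K * ‖f t‖ + ‖φ 0‖‖ := Real.le_norm_self _

theorem intervalIntegrable_of_locallyIntegrable {E : Type*} [NormedAddCommGroup E] {f : ℝ → E}
    {μ : Measure ℝ} (hf : LocallyIntegrable f μ) (a b : ℝ) : IntervalIntegrable f μ a b :=
  (hf.integrableOn_isCompact isCompact_uIcc).intervalIntegrable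

theorem tendsto_intervalIntegral_add_atTop_zero {w : ℝ → ℝ} (hw : LocallyIntegrable w volume)
    (hw0 : 0 ≤ w) {S C : ℝ} (hC : ∀ T, S ≤ T → ∫ s in S..T, w s ≤ C) (d : ℝ) :
    Tendsto (fun t => ∫ s in t..t + d, w s) atTop (𝓝 0) := by
  have hint := intervalIntegrable_of_locallyIntegrable hw
  have hIoi : IntegrableOn w (Ioi S) := by
    refine integrableOn_Ioi_of_intervalIntegral_norm_bounded C S (fun T => (hint S T).1)
      tendsto_id ?_
    filter_upwards [eventually_ge_atTop S] with T hT
    simpa only [Real.norm_of_nonneg (hw0 _)] using hC T hT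
  have hlim : ∀ {b : ℝ → ℝ}, Tendsto b atTop atTop → _ :=
    intervalIntegral_tendsto_integral_Ioi S hIoi
  have hdiff := (hlim (tendsto_atTop_add_const_right _ d tendsto_id)).sub (hlim tendsto_id)
  rw [sub_self] at hdiff
  exact hdiff.congr fun t => intervalIntegral.integral_interval_sub_left (hint _ _) (hint _ _)

theorem eventually_not_ae_le_of_integral_bounded {w : ℝ → ℝ} (hw : LocallyIntegrable w volume)
    (hw0 : 0 ≤ w) {S C : ℝ} (hC : ∀ T, S ≤ T → ∫ s in S..T, w s ≤ C) {d κ : ℝ}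
    (hd : 0 < d) (hκ : 0 < κ) :
    ∀ᶠ t in atTop, ¬ ∀ᵐ s, s ∈ Icc t (t + d) → κ ≤ w s := by
  filter_upwards [(tendsto_intervalIntegral_add_atTop_zero hw hw0 hC d).eventually_lt_const
    (mul_pos hd hκ)] with t hlt hle
  refine hlt.not_ge ?_
  calc d * κ = ∫ _ in t..t + d, κ := by simp
    _ ≤ ∫ s in t..t + d, w s :=
      intervalIntegral.integral_mono_ae_restrict (by linarith) (by simp)
        (intervalIntegrable_of_locallyIntegrable hw _ _)
        ((ae_restrict_iff' measurableSet_Icc).mpr hle)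

theorem eventually_lt_add_of_forall_eventually_not_separated {α : Type*} {l : Filter α}
    {p q : α → ℝ} {s : Set ℝ} (hs : IsCompact s) (hp : ∀ᶠ t in l, p t ∈ s)
    (hsep : ∀ a b, a < b → ∀ᶠ t in l, ¬ (p t ≤ a ∧ b ≤ q t)) {ε : ℝ} (hε : 0 < ε) :
    ∀ᶠ t in l, q t < p t + ε := by
  by_contra hfreq
  have hfreq' : ∃ᶠ t in l ⊓ 𝓟 {t | p t + ε ≤ q t}, p t ∈ s := by
    refine frequently_inf_principal.mpr
      (((not_eventually.mp hfreq).and_eventually hp).mono fun t ht => ?_)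
    exact ⟨not_lt.mp ht.1, ht.2⟩
  obtain ⟨c, -, hc⟩ := hs.exists_mapClusterPt_of_frequently hfreq'
  have hnear := frequently_inf_principal.mp
    (hc.frequently (Ioo_mem_nhds (show c - ε / 3 < c by linarith) (show c < c + ε / 3 by linarith)))
  obtain ⟨t, ⟨hq, hpl, hpr⟩, hnot⟩ :=
    (hnear.and_eventually (hsep (c + ε / 3) (c + 2 * ε / 3) (by linarith))).exists
  exact hnot ⟨hpr.le, by linarith [show p t + ε ≤ q t from hq]⟩

end Analysis

section OneSidedLimits

variable {g : ℝ → ℝ}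

theorem rightLim_lt_leftLim_of_strictMono (hg : StrictMono g) {a b : ℝ} (hab : a < b) :
    rightLim g a < leftLim g b := by
  obtain ⟨c, hac, hcb⟩ := exists_between hab
  obtain ⟨d, hcd, hdb⟩ := exists_between hcb
  calc rightLim g a ≤ g c := hg.monotone.rightLim_le hac
    _ < g d := hg hcd
    _ ≤ leftLim g b := hg.monotone.le_leftLim hdb

theorem monotone_neg_comp_neg (hg : Monotone g) : Monotone fun z => -g (-z) :=
  fun _ _ hab => neg_le_neg (hg (neg_le_neg hab))

theorem strictMono_neg_comp_neg (hg : StrictMono g) : StrictMono fun z => -g (-z) :=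
  fun _ _ hab => neg_lt_neg (hg (neg_lt_neg hab))

theorem leftLim_neg_comp_neg (hg : Monotone g) (a : ℝ) :
    leftLim (fun z => -g (-z)) (-a) = -rightLim g a :=
  leftLim_eq_of_tendsto ((hg.tendsto_rightLim a).comp tendsto_neg_nhdsLT_neg).neg

theorem rightLim_neg_comp_neg (hg : Monotone g) (a : ℝ) :
    rightLim (fun z => -g (-z)) (-a) = -leftLim g a :=
  rightLim_eq_of_tendsto ((hg.tendsto_leftLim a).comp tendsto_neg_nhdsGT_neg).neg

end OneSidedLimits

section Laplacian

variable {ι : Type*} {L : Matrix ι ι ℝ}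

/-- The edge relation of the graph `G(L)`: the weight of the edge `a → b` sits in row `b` of `L`. -/
def LaplacianEdge (L : Matrix ι ι ℝ) (a b : ι) : Prop :=
  a ≠ b ∧ L b a < 0

/-- The roots of `G(L)`, i.e. the vertices with a directed path to every vertex. A spanning tree
of `G(L)` is encoded by its root. -/
def IsLaplacianRoot (L : Matrix ι ι ℝ) (r : ι) : Prop :=
  ∀ w, Relation.ReflTransGen (LaplacianEdge L) r w

/-- The part of the vector `y` above the level `c`, coordinatewise. It is applied to states at a
level `θ` and to selected values of `g` at the level `g(θ+)`. -/
def overshoot (c : ℝ) (y : ι → ℝ) : ι → ℝ :=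
  fun j => (y j - c)⁺

theorem overshoot_nonneg (c : ℝ) (y : ι → ℝ) : 0 ≤ overshoot c y :=
  fun _ => posPart_nonneg _

theorem overshoot_apply_nonpos_iff {c : ℝ} {y : ι → ℝ} {j : ι} :
    overshoot c y j ≤ 0 ↔ y j ≤ c := by
  rw [overshoot, posPart_nonpos, sub_nonpos]

theorem overshoot_apply_eq_zero_iff {c : ℝ} {y : ι → ℝ} {j : ι} :
    overshoot c y j = 0 ↔ y j ≤ c := by
  rw [overshoot, posPart_eq_zero, sub_nonpos]

variable [Fintype ι]

theorem lipschitzWith_overshoot (c : ℝ) : LipschitzWith 1 (overshoot (ι := ι) c) := by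
  refine LipschitzWith.of_dist_le_mul fun y z => (dist_pi_le_iff (by positivity)).mpr fun j => ?_
  calc dist (y j - c)⁺ (z j - c)⁺ ≤ 1 * dist (y j - c) (z j - c) :=
        lipschitzWith_posPart.dist_le_mul _ _
    _ ≤ 1 * dist y z := by
      rw [dist_sub_right]
      gcongr
      exact dist_le_pi_dist y z j

/-- Laplacians of weighted directed graphs: nonpositive off-diagonal entries and vanishing row
sums, without any symmetry. -/
structure IsGraphLaplacian (L : Matrix ι ι ℝ) : Prop where
  offDiag_nonpos : ∀ i j, i ≠ j → L i j ≤ 0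
  row_sum_eq_zero : ∀ i, ∑ j, L i j = 0

namespace IsGraphLaplacian

theorem mulVec_sub_const (hL : IsGraphLaplacian L) (y : ι → ℝ) (c : ℝ) (i : ι) :
    (L *ᵥ fun k => y k - c) i = (L *ᵥ y) i := by
  simp only [mulVec, dotProduct, mul_sub, Finset.sum_sub_distrib, ← Finset.sum_mul,
    hL.row_sum_eq_zero i, zero_mul, sub_zero]

theorem mulVec_const_sub (hL : IsGraphLaplacian L) (y : ι → ℝ) (c : ℝ) (i : ι) :
    (L *ᵥ fun k => c - y k) i = -(L *ᵥ y) i := by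
  rw [← hL.mulVec_sub_const y c i, ← Pi.neg_apply, ← mulVec_neg]
  simp only [Pi.neg_def, neg_sub]

theorem mulVec_le_sum (hL : IsGraphLaplacian L) {u : ι → ℝ} (hu : 0 ≤ u) {i : ι} {s : Finset ι}
    (hi : i ∈ s) : (L *ᵥ u) i ≤ ∑ k ∈ s, L i k * u k :=
  Finset.sum_le_sum_of_subset_of_nonpos' s.subset_univ fun k _ hk =>
    mul_nonpos_of_nonpos_of_nonneg (hL.offDiag_nonpos i k (ne_of_mem_of_not_mem hi hk)) (hu k)

theorem mulVec_le_mul_of_apply_eq_zero (hL : IsGraphLaplacian L) {u : ι → ℝ} (hu : 0 ≤ u) {i : ι}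
    (hi : u i = 0) (j : ι) : (L *ᵥ u) i ≤ L i j * u j := by
  classical
  calc (L *ᵥ u) i ≤ ∑ k ∈ {i, j}, L i k * u k := hL.mulVec_le_sum hu (Finset.mem_insert_self i _)
    _ = L i j * u j := by rw [Finset.sum_insert_zero (by rw [hi, mul_zero]), Finset.sum_singleton]

theorem mulVec_nonneg_of_forall_le (hL : IsGraphLaplacian L) {y : ι → ℝ} {i : ι}
    (hi : ∀ k, y k ≤ y i) : 0 ≤ (L *ᵥ y) i := by
  have h := hL.mulVec_le_mul_of_apply_eq_zero (u := fun k => y i - y k)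
    (fun k => sub_nonneg.mpr (hi k)) (sub_self _) i
  rw [hL.mulVec_const_sub, sub_self, mul_zero] at h
  exact neg_nonpos.mp h

theorem mulVec_overshoot_le (hL : IsGraphLaplacian L) {y : ι → ℝ} {c : ℝ} {i : ι}
    (hi : c ≤ y i) : (L *ᵥ overshoot c y) i ≤ (L *ᵥ y) i := by
  rw [← hL.mulVec_sub_const y c i]
  simp only [mulVec, dotProduct, overshoot]
  refine Finset.sum_le_sum fun k _ => ?_
  rcases eq_or_ne i k with rfl | hik
  · rw [posPart_of_nonneg (sub_nonneg.mpr hi)]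
  · exact mul_le_mul_of_nonpos_left (le_posPart _) (hL.offDiag_nonpos i k hik)

theorem apply_le_add_div_of_edge (hL : IsGraphLaplacian L) {y : ι → ℝ} {C D : ℝ} {a b : ι}
    (hab : LaplacianEdge L a b) (hC : (L *ᵥ y) b ≤ C) (hD : ∀ k, y k ≤ y b + D) :
    y b ≤ y a + (C + L b b * D) / (-L b a) := by
  classical
  have hdrop := hL.mulVec_le_sum (u := fun k => y b + D - y k) (i := b) (s := {b, a})
    (fun k => sub_nonneg.mpr (hD k)) (Finset.mem_insert_self b _)
  rw [hL.mulVec_const_sub, Finset.sum_pair hab.1.symm, add_sub_cancel_left] at hdrop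
  have hdiv : y b + D - y a ≤ (C + L b b * D) / (-L b a) := by
    rw [le_div_iff₀ (neg_pos.mpr hab.2)]
    linarith
  linarith [hD b]

theorem diag_nonneg (hL : IsGraphLaplacian L) (i : ι) : 0 ≤ L i i := by
  classical
  have h := hL.mulVec_nonneg_of_forall_le (y := Pi.single i 1) (i := i) fun k => by
    rcases eq_or_ne k i with rfl | hki
    · rfl
    · simp [hki]
  simpa using h

-- Walk the path backwards from the maximiser `w`: if `y b` is close to the maximum, the bound on
-- row `b` of `L *ᵥ y` forces `y` to be close to the maximum at every in-neighbour of `b`.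
theorem exists_le_add_mul_of_reflTransGen (hL : IsGraphLaplacian L) {a w : ι}
    (haw : Relation.ReflTransGen (LaplacianEdge L) a w) :
    ∃ K : ℝ, 0 ≤ K ∧ ∀ C : ℝ, 0 ≤ C → ∀ y : ι → ℝ, (∀ i, (L *ᵥ y) i ≤ C) → (∀ k, y k ≤ y w) →
      y w ≤ y a + K * C := by
  induction haw using Relation.ReflTransGen.head_induction_on with
  | refl => exact ⟨0, le_rfl, fun C _ y _ _ => by simp⟩
  | @head a b hab _ ih =>
    obtain ⟨K, hK, ih⟩ := ih
    have hweight : 0 < -L b a := neg_pos.mpr hab.2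
    have hdiag := hL.diag_nonneg b
    refine ⟨K + (1 + L b b * K) / (-L b a), by positivity, fun C hC y hy hmax => ?_⟩
    have hwb : y w ≤ y b + K * C := ih C hC y hy hmax
    have hba := hL.apply_le_add_div_of_edge hab (hy b) fun k => (hmax k).trans hwb
    calc y w ≤ y a + (C + L b b * (K * C)) / (-L b a) + K * C := by linarith
      _ = y a + (K + (1 + L b b * K) / (-L b a)) * C := by ring

theorem exists_le_root_add_mul (hL : IsGraphLaplacian L) {r : ι} (hr : IsLaplacianRoot L r) :
    ∃ K : ℝ, ∀ C : ℝ, 0 ≤ C → ∀ y : ι → ℝ, (∀ i, (L *ᵥ y) i ≤ C) → ∀ j, y j ≤ y r + K * C := by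
  choose K hK hpath using fun w => hL.exists_le_add_mul_of_reflTransGen (hr w)
  refine ⟨∑ w, K w, fun C hC y hy j => ?_⟩
  obtain ⟨w, -, hw⟩ := Finset.exists_max_image Finset.univ y ⟨r, Finset.mem_univ r⟩
  have hmax : ∀ k, y k ≤ y w := fun k => hw k (Finset.mem_univ k)
  calc y j ≤ y w := hmax j
    _ ≤ y r + K w * C := hpath w C hC y hy hmax
    _ ≤ y r + (∑ w, K w) * C := by
      gcongr
      exact Finset.single_le_sum (fun v _ => hK v) (Finset.mem_univ w)

theorem vecMul_abs_nonpos (hL : IsGraphLaplacian L) {ξ : ι → ℝ} (hξ : ξ ᵥ* L = 0) {j : ι}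
    (hj : 0 ≤ ξ j) : (|ξ| ᵥ* L) j ≤ 0 := by
  rw [← Pi.zero_apply (M := fun _ : ι => ℝ) j, ← hξ]
  refine Finset.sum_le_sum fun i _ => ?_
  rcases eq_or_ne i j with rfl | hij
  · rw [Pi.abs_apply, abs_of_nonneg hj]
  · exact mul_le_mul_of_nonpos_right (le_abs_self _) (hL.offDiag_nonpos i j hij)

theorem vecMul_abs_eq_zero (hL : IsGraphLaplacian L) {ξ : ι → ℝ} (hξ : ξ ᵥ* L = 0) :
    |ξ| ᵥ* L = 0 := by
  have hnonpos : ∀ j, (|ξ| ᵥ* L) j ≤ 0 := fun j => by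
    rcases le_total 0 (ξ j) with hj | hj
    · exact hL.vecMul_abs_nonpos hξ hj
    · rw [← abs_neg]
      exact hL.vecMul_abs_nonpos (by rw [neg_vecMul, hξ, neg_zero]) (neg_nonneg.mpr hj)
  have hsum : ∑ j, (|ξ| ᵥ* L) j = 0 := by
    simp only [vecMul, dotProduct]
    rw [Finset.sum_comm]
    simp only [← Finset.mul_sum, hL.row_sum_eq_zero, mul_zero, Finset.sum_const_zero]
  funext j
  exact (Finset.sum_eq_zero_iff_of_nonpos fun j _ => hnonpos j).mp hsum j (Finset.mem_univ j)

theorem pos_of_edge_of_vecMul_eq_zero (hL : IsGraphLaplacian L) {η : ι → ℝ} (hη0 : 0 ≤ η)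
    (hη : η ᵥ* L = 0) {a b : ι} (hab : LaplacianEdge L a b) (hb : 0 < η b) : 0 < η a := by
  refine (hη0 a).lt_of_ne' fun ha => ?_
  have hterm : ∀ k ∈ Finset.univ, η k * L k a ≤ 0 := fun k _ => by
    rcases eq_or_ne k a with rfl | hka
    · rw [ha, Pi.zero_apply, zero_mul]
    · exact mul_nonpos_of_nonneg_of_nonpos (hη0 k) (hL.offDiag_nonpos k a hka)
  have hzero := (Finset.sum_eq_zero_iff_of_nonpos hterm).mp (congrFun hη a) b (Finset.mem_univ b)
  exact (mul_neg_of_pos_of_neg hb hab.2).ne hzero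

theorem pos_of_reflTransGen_of_vecMul_eq_zero (hL : IsGraphLaplacian L) {η : ι → ℝ} (hη0 : 0 ≤ η)
    (hη : η ᵥ* L = 0) {a b : ι} (hab : Relation.ReflTransGen (LaplacianEdge L) a b)
    (hb : 0 < η b) : 0 < η a := by
  induction hab using Relation.ReflTransGen.head_induction_on with
  | refl => exact hb
  | head hedge _ ih => exact hL.pos_of_edge_of_vecMul_eq_zero hη0 hη hedge ih

end IsGraphLaplacian

end Laplacian

section VectorIntegrals

variable {ι κ : Type*} [Fintype ι] {f : ℝ → ι → ℝ}

theorem locallyIntegrable_apply (hf : LocallyIntegrable f volume) (j : ι) :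
    LocallyIntegrable (fun s => f s j) volume :=
  locallyIntegrable_comp_of_lipschitzWith (LipschitzWith.eval j) hf

theorem locallyIntegrable_mulVec_apply (M : Matrix κ ι ℝ) (hf : LocallyIntegrable f volume)
    (i : κ) : LocallyIntegrable (fun s => (M *ᵥ f s) i) volume :=
  locallyIntegrable_comp_of_lipschitzWith
    (LinearMap.proj i ∘ₗ M.mulVecLin).toContinuousLinearMap.lipschitz hf

theorem dotProduct_intervalIntegral (v : ι → ℝ) (hf : LocallyIntegrable f volume) (a b : ℝ) :
    v ⬝ᵥ (fun j => ∫ s in a..b, f s j) = ∫ s in a..b, v ⬝ᵥ f s := by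
  simp only [dotProduct, ← intervalIntegral.integral_const_mul]
  exact (intervalIntegral.integral_finsetSum fun j _ =>
    (intervalIntegrable_of_locallyIntegrable (locallyIntegrable_apply hf j) a b).const_mul _).symm

end VectorIntegrals

section Filippov

variable {ι : Type*} {g : ℝ → ℝ} {x γ : ℝ → ι → ℝ}

/-- The time integral over `[S, T]` of the overshoot of the selected values above `g(θ+)`. -/
noncomputable def cumulativeExcess (g : ℝ → ℝ) (γ : ℝ → ι → ℝ) (θ S T : ℝ) : ι → ℝ :=
  fun j => ∫ s in S..T, overshoot (rightLim g θ) (γ s) j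

/-- The part of `cumulativeExcess g γ θ S T j` collected while vertex `i` is at or below `θ`.
This quantity measures how long `i` and `j` are separated by the level `θ`. -/
noncomputable def blockedExcess (g : ℝ → ℝ) (x γ : ℝ → ι → ℝ) (θ S T : ℝ) (i j : ι) : ℝ :=
  ∫ s in S..T, {s | x s i ≤ θ}.indicator (fun s => overshoot (rightLim g θ) (γ s) j) s

theorem cumulativeExcess_nonneg (θ : ℝ) {S T : ℝ} (hST : S ≤ T) :
    0 ≤ cumulativeExcess g γ θ S T :=
  fun j => intervalIntegral.integral_nonneg hST fun _ _ => overshoot_nonneg _ _ j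

variable [Fintype ι] {L : Matrix ι ι ℝ} {x0 : ι → ℝ}

/-- Filippov solutions of the protocol `ẋ = -L g(x)`, where `g` acts coordinatewise: `γ` is the
selection from the intervals `K[g](x_j)`, and the equation is required in integrated form on
`[0, ∞)` only. -/
structure IsFilippovSolution (L : Matrix ι ι ℝ) (g : ℝ → ℝ) (x0 : ι → ℝ) (x γ : ℝ → ι → ℝ) :
    Prop where
  continuous : Continuous x
  locallyIntegrable : LocallyIntegrable γ volume
  mem_Icc : ∀ᵐ t, 0 ≤ t → ∀ j, γ t j ∈ Icc (leftLim g (x t j)) (rightLim g (x t j))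
  eq_sub_integral : ∀ t, 0 ≤ t → ∀ i, x t i = x0 i - ∫ s in (0 : ℝ)..t, (L *ᵥ γ s) i

namespace IsFilippovSolution

theorem neg (hg : Monotone g) (h : IsFilippovSolution L g x0 x γ) :
    IsFilippovSolution L (fun z => -g (-z)) (-x0) (-x) (-γ) where
  continuous := h.continuous.neg
  locallyIntegrable := h.locallyIntegrable.neg
  mem_Icc := by
    filter_upwards [h.mem_Icc] with t ht ht0 j
    simp only [Pi.neg_apply, leftLim_neg_comp_neg hg, rightLim_neg_comp_neg hg]
    exact ⟨neg_le_neg (ht ht0 j).2, neg_le_neg (ht ht0 j).1⟩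
  eq_sub_integral t ht i := by
    simp only [Pi.neg_apply, mulVec_neg, intervalIntegral.integral_neg, h.eq_sub_integral t ht i]
    ring

theorem apply_zero (h : IsFilippovSolution L g x0 x γ) : x 0 = x0 := by
  funext i
  simpa using h.eq_sub_integral 0 le_rfl i

theorem intervalIntegrable_mulVec (h : IsFilippovSolution L g x0 x γ) (i : ι) (a b : ℝ) :
    IntervalIntegrable (fun s => (L *ᵥ γ s) i) volume a b :=
  intervalIntegrable_of_locallyIntegrable (locallyIntegrable_mulVec_apply L h.locallyIntegrable i)
    a b

theorem apply_eq_sub_integral (h : IsFilippovSolution L g x0 x γ) {S T : ℝ} (hS : 0 ≤ S)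
    (hT : 0 ≤ T) (i : ι) : x T i = x S i - ∫ s in S..T, (L *ᵥ γ s) i := by
  have hadd := intervalIntegral.integral_add_adjacent_intervals
    (h.intervalIntegrable_mulVec i 0 S) (h.intervalIntegrable_mulVec i S T)
  rw [h.eq_sub_integral T hT, h.eq_sub_integral S hS, ← hadd]
  ring

theorem dotProduct_eq (h : IsFilippovSolution L g x0 x γ) {ξ : ι → ℝ} (hξ : ξ ᵥ* L = 0) {t : ℝ}
    (ht : 0 ≤ t) : ξ ⬝ᵥ x t = ξ ⬝ᵥ x0 := by
  have hx : x t = x0 - L *ᵥ fun j => ∫ s in (0 : ℝ)..t, γ s j := by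
    funext i
    rw [h.eq_sub_integral t ht i, Pi.sub_apply]
    exact congrArg (x0 i - ·) (dotProduct_intervalIntegral (L i) h.locallyIntegrable 0 t).symm
  rw [hx, dotProduct_sub, dotProduct_mulVec, hξ, zero_dotProduct, sub_zero]

theorem locallyIntegrable_overshoot (h : IsFilippovSolution L g x0 x γ) (c : ℝ) :
    LocallyIntegrable (fun s => overshoot c (γ s)) volume :=
  locallyIntegrable_comp_of_lipschitzWith (lipschitzWith_overshoot c) h.locallyIntegrable

theorem locallyIntegrable_indicator_overshoot (h : IsFilippovSolution L g x0 x γ) (θ c : ℝ)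
    (i j : ι) :
    LocallyIntegrable ({s | x s i ≤ θ}.indicator fun s => overshoot c (γ s) j) volume := by
  have hcont : Continuous fun s => x s i := (continuous_apply i).comp h.continuous
  exact (locallyIntegrable_apply (h.locallyIntegrable_overshoot c) j).indicator
    (measurableSet_le hcont.measurable measurable_const)

theorem ae_overshoot_eq_zero (hg : Monotone g) (h : IsFilippovSolution L g x0 x γ) (θ : ℝ) :
    ∀ᵐ t, 0 ≤ t → ∀ j, x t j ≤ θ → overshoot (rightLim g θ) (γ t) j = 0 := by
  filter_upwards [h.mem_Icc] with t ht ht0 j hj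
  exact overshoot_apply_eq_zero_iff.mpr ((ht ht0 j).2.trans (hg.rightLim hj))

theorem ae_sub_le_overshoot (hg : Monotone g) (h : IsFilippovSolution L g x0 x γ) (θ θ' : ℝ) :
    ∀ᵐ t, 0 ≤ t → ∀ j, θ' ≤ x t j →
      leftLim g θ' - rightLim g θ ≤ overshoot (rightLim g θ) (γ t) j := by
  filter_upwards [h.mem_Icc] with t ht ht0 j hj
  exact (sub_le_sub_right ((hg.leftLim hj).trans (ht ht0 j).1) _).trans (le_posPart _)

theorem ae_mulVec_overshoot_sub_le (hL : IsGraphLaplacian L) (hg : Monotone g)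
    (h : IsFilippovSolution L g x0 x γ) (θ : ℝ) (i j : ι) :
    ∀ᵐ t, 0 ≤ t → (L *ᵥ overshoot (rightLim g θ) (γ t)) i -
        L i j * {s | x s i ≤ θ}.indicator (fun s => overshoot (rightLim g θ) (γ s) j) t ≤
      {s | 0 < x s i - θ}.indicator (fun s => (L *ᵥ γ s) i) t := by
  filter_upwards [h.mem_Icc, h.ae_overshoot_eq_zero hg θ] with t hmem hzero ht
  rcases lt_or_ge θ (x t i) with hi | hi
  · rw [indicator_of_notMem (by exact hi.not_ge), indicator_of_mem (by exact sub_pos.mpr hi),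
      mul_zero, sub_zero]
    exact hL.mulVec_overshoot_le ((hg.rightLim_le_leftLim hi).trans (hmem ht i).1)
  · rw [indicator_of_mem (by exact hi), indicator_of_notMem (by exact (sub_nonpos.mpr hi).not_gt),
      sub_nonpos]
    exact hL.mulVec_le_mul_of_apply_eq_zero (overshoot_nonneg _ _) (hzero ht i hi) j

theorem overshoot_sub_overshoot_eq_integral (h : IsFilippovSolution L g x0 x γ) (θ : ℝ) {S T : ℝ}
    (hS : 0 ≤ S) (hST : S ≤ T) (i : ι) :
    overshoot θ (x S) i - overshoot θ (x T) i =
      ∫ s in S..T, {s | 0 < x s i - θ}.indicator (fun s => (L *ᵥ γ s) i) s := by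
  have hchain := posPart_sub_posPart_eq_integral_indicator (F := fun s => x s i - θ) hST
    (h.intervalIntegrable_mulVec i S T).neg fun t ht => by
      rw [h.apply_eq_sub_integral hS (hS.trans ht.1) i]
      simp only [Pi.neg_apply, intervalIntegral.integral_neg]
      ring
  rw [indicator_neg'] at hchain
  simp only [Pi.neg_apply, intervalIntegral.integral_neg] at hchain
  rw [overshoot, overshoot, ← neg_sub, hchain, neg_neg]

theorem mulVec_cumulativeExcess_sub_le (hL : IsGraphLaplacian L) (hg : Monotone g)
    (h : IsFilippovSolution L g x0 x γ) (θ : ℝ) {S T : ℝ} (hS : 0 ≤ S) (hST : S ≤ T) (i j : ι) :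
    (L *ᵥ cumulativeExcess g γ θ S T) i - L i j * blockedExcess g x γ θ S T i j ≤
      overshoot θ (x S) i - overshoot θ (x T) i := by
  have hover := h.locallyIntegrable_overshoot (rightLim g θ)
  have hLover := intervalIntegrable_of_locallyIntegrable (locallyIntegrable_mulVec_apply L hover i)
    S T
  have hblocked := (intervalIntegrable_of_locallyIntegrable
    (h.locallyIntegrable_indicator_overshoot θ (rightLim g θ) i j) S T).const_mul (L i j)
  have hpos : MeasurableSet {s | 0 < x s i - θ} :=
    measurableSet_lt measurable_const
      (((continuous_apply i).comp h.continuous).sub continuous_const).measurable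
  have hrhs := intervalIntegrable_of_locallyIntegrable
    ((locallyIntegrable_mulVec_apply L h.locallyIntegrable i).indicator hpos) S T
  calc _ = ∫ s in S..T, ((L *ᵥ overshoot (rightLim g θ) (γ s)) i -
        L i j * {s | x s i ≤ θ}.indicator (fun s => overshoot (rightLim g θ) (γ s) j) s) := by
        rw [intervalIntegral.integral_sub hLover hblocked, intervalIntegral.integral_const_mul]
        exact congrArg (· - _) (dotProduct_intervalIntegral (L i) hover S T)
    _ ≤ ∫ s in S..T, {s | 0 < x s i - θ}.indicator (fun s => (L *ᵥ γ s) i) s := by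
        refine intervalIntegral.integral_mono_ae_restrict hST (hLover.sub hblocked) hrhs ?_
        refine (ae_restrict_iff' measurableSet_Icc).mpr ?_
        filter_upwards [h.ae_mulVec_overshoot_sub_le hL hg θ i j] with s hs hsST
        exact hs (hS.trans hsST.1)
    _ = _ := (h.overshoot_sub_overshoot_eq_integral θ hS hST i).symm

theorem blockedExcess_self (hg : Monotone g) (h : IsFilippovSolution L g x0 x γ) (θ : ℝ)
    {S T : ℝ} (hS : 0 ≤ S) (hST : S ≤ T) (i : ι) : blockedExcess g x γ θ S T i i = 0 := by
  refine intervalIntegral.integral_zero_ae ?_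
  filter_upwards [h.ae_overshoot_eq_zero hg θ] with s hs hsST
  rw [uIoc_of_le hST] at hsST
  exact indicator_apply_eq_zero.mpr fun hi => hs (hS.trans hsST.1.le) i hi

theorem mulVec_cumulativeExcess_le (hL : IsGraphLaplacian L) (hg : Monotone g)
    (h : IsFilippovSolution L g x0 x γ) (θ : ℝ) {S T : ℝ} (hS : 0 ≤ S) (hST : S ≤ T) (i : ι) :
    (L *ᵥ cumulativeExcess g γ θ S T) i ≤ overshoot θ (x S) i - overshoot θ (x T) i := by
  simpa only [h.blockedExcess_self hg θ hS hST i, mul_zero, sub_zero] using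
    h.mulVec_cumulativeExcess_sub_le hL hg θ hS hST i i

theorem cumulativeExcess_eq_zero (hg : Monotone g) (h : IsFilippovSolution L g x0 x γ) {θ S T : ℝ}
    (hS : 0 ≤ S) (hST : S ≤ T) {j : ι} (hj : ∀ t, S ≤ t → x t j ≤ θ) :
    cumulativeExcess g γ θ S T j = 0 := by
  refine intervalIntegral.integral_zero_ae ?_
  filter_upwards [h.ae_overshoot_eq_zero hg θ] with s hs hsST
  rw [uIoc_of_le hST] at hsST
  exact hs (hS.trans hsST.1.le) j (hj s hsST.1.le)

theorem apply_le_of_initial_le (hL : IsGraphLaplacian L) {r : ι} (hr : IsLaplacianRoot L r)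
    (hg : Monotone g) (h : IsFilippovSolution L g x0 x γ) {θ : ℝ} (hx0 : ∀ i, x0 i ≤ θ) {t : ℝ}
    (ht : 0 ≤ t) (i : ι) : x t i ≤ θ := by
  have hdecr : ∀ T, 0 ≤ T → ∀ k,
      (L *ᵥ cumulativeExcess g γ θ 0 T) k ≤ -overshoot θ (x T) k := fun T hT k => by
    have hstart : overshoot θ (x 0) k = 0 :=
      overshoot_apply_eq_zero_iff.mpr (h.apply_zero ▸ hx0 k)
    simpa only [hstart, zero_sub] using h.mulVec_cumulativeExcess_le hL hg θ le_rfl hT k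
  obtain ⟨K, hK⟩ := hL.exists_le_root_add_mul hr
  have hmax : ∀ T, 0 ≤ T → ∀ k,
      cumulativeExcess g γ θ 0 T k ≤ cumulativeExcess g γ θ 0 T r := fun T hT k => by
    simpa only [mul_zero, add_zero] using hK 0 le_rfl (cumulativeExcess g γ θ 0 T)
      (fun i => (hdecr T hT i).trans (neg_nonpos.mpr (overshoot_nonneg _ _ i))) k
  have hroot : ∀ T, 0 ≤ T → x T r ≤ θ := fun T hT => by
    have hLr := (hL.mulVec_nonneg_of_forall_le (hmax T hT)).trans (hdecr T hT r)
    exact overshoot_apply_nonpos_iff.mp (neg_nonneg.mp hLr)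
  have hzero : cumulativeExcess g γ θ 0 t = 0 := by
    funext k
    refine le_antisymm ?_ (cumulativeExcess_nonneg θ ht k)
    exact (hmax t ht k).trans_eq (h.cumulativeExcess_eq_zero hg le_rfl ht hroot)
  have hover := hdecr t ht i
  rw [hzero, mulVec_zero, Pi.zero_apply] at hover
  exact overshoot_apply_nonpos_iff.mp (neg_nonneg.mp hover)

theorem apply_mem_Icc_norm (hL : IsGraphLaplacian L) {r : ι} (hr : IsLaplacianRoot L r)
    (hg : Monotone g) (h : IsFilippovSolution L g x0 x γ) {t : ℝ} (ht : 0 ≤ t) (i : ι) :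
    x t i ∈ Icc (-‖x0‖) ‖x0‖ := by
  have hx0 : ∀ k, |x0 k| ≤ ‖x0‖ := norm_le_pi_norm x0
  exact ⟨neg_le.mp ((h.neg hg).apply_le_of_initial_le hL hr (monotone_neg_comp_neg hg)
      (fun k => (neg_le_abs _).trans (hx0 k)) ht i),
    h.apply_le_of_initial_le hL hr hg (fun k => (le_abs_self _).trans (hx0 k)) ht i⟩

theorem exists_ae_norm_mulVec_le (hg : Monotone g) (h : IsFilippovSolution L g x0 x γ) {a b : ℝ}
    (hab : ∀ t, 0 ≤ t → ∀ i, x t i ∈ Icc a b) : ∃ B, ∀ᵐ t, 0 ≤ t → ‖L *ᵥ γ t‖ ≤ B := by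
  have hcompact : IsCompact ((L *ᵥ ·) '' Icc (fun _ => leftLim g a) fun _ => rightLim g b) :=
    isCompact_Icc.image (continuous_const.matrix_mulVec continuous_id)
  obtain ⟨B, hB⟩ := hcompact.isBounded.exists_norm_le
  refine ⟨B, ?_⟩
  filter_upwards [h.mem_Icc] with t ht ht0
  refine hB _ (mem_image_of_mem _ ⟨fun j => ?_, fun j => ?_⟩)
  · exact (hg.leftLim (hab t ht0 j).1).trans (ht ht0 j).1
  · exact (ht ht0 j).2.trans (hg.rightLim (hab t ht0 j).2)

theorem uniformContinuousOn (hg : Monotone g) (h : IsFilippovSolution L g x0 x γ) {a b : ℝ}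
    (hab : ∀ t, 0 ≤ t → ∀ i, x t i ∈ Icc a b) : UniformContinuousOn x (Ici 0) := by
  obtain ⟨B, hB⟩ := h.exists_ae_norm_mulVec_le hg hab
  refine (LipschitzOnWith.of_dist_le_mul (K := B.toNNReal) fun s hs t ht => ?_).uniformContinuousOn
  refine (dist_pi_le_iff (by positivity)).mpr fun i => ?_
  rw [h.apply_eq_sub_integral ht hs i, dist_eq_norm, sub_sub_cancel_left, norm_neg, dist_eq_norm]
  refine intervalIntegral.norm_integral_le_of_norm_le_const_ae ?_
  filter_upwards [hB] with u hu hust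
  have hu0 : 0 ≤ u := (le_inf ht hs).trans hust.1.le
  exact (norm_le_pi_norm _ i).trans ((hu hu0).trans (Real.le_coe_toNNReal B))

theorem exists_forall_mem_Icc_abs_sub_lt (hL : IsGraphLaplacian L) {r : ι}
    (hr : IsLaplacianRoot L r) (hg : Monotone g) (h : IsFilippovSolution L g x0 x γ) {ε : ℝ}
    (hε : 0 < ε) :
    ∃ d > 0, ∀ t, 0 ≤ t → ∀ s ∈ Icc t (t + d), ∀ i, |x s i - x t i| < ε := by
  have hunif := h.uniformContinuousOn hg fun t ht i => h.apply_mem_Icc_norm hL hr hg ht i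
  obtain ⟨δ, hδ, hclose⟩ := Metric.uniformContinuousOn_iff.mp hunif ε hε
  refine ⟨δ / 2, half_pos hδ, fun t ht s hs i => ?_⟩
  refine (dist_le_pi_dist (x s) (x t) i).trans_lt (hclose s (ht.trans hs.1) t ht ?_)
  rw [Real.dist_eq, abs_of_nonneg (sub_nonneg.mpr hs.1)]
  linarith [hs.2]

theorem exists_cumulativeExcess_le (hL : IsGraphLaplacian L) {r : ι} (hr : IsLaplacianRoot L r)
    (hg : Monotone g) (h : IsFilippovSolution L g x0 x γ) {θ S : ℝ} (hS : 0 ≤ S)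
    (hroot : ∀ t, S ≤ t → x t r ≤ θ) :
    ∃ C, ∀ T, S ≤ T → ∀ j, cumulativeExcess g γ θ S T j ≤ C := by
  obtain ⟨K, hK⟩ := hL.exists_le_root_add_mul hr
  have hnonneg := overshoot_nonneg θ (x S)
  refine ⟨K * ∑ i, overshoot θ (x S) i, fun T hT j => ?_⟩
  have hLle : ∀ i, (L *ᵥ cumulativeExcess g γ θ S T) i ≤ ∑ i, overshoot θ (x S) i := fun i =>
    calc _ ≤ overshoot θ (x S) i - overshoot θ (x T) i :=
          h.mulVec_cumulativeExcess_le hL hg θ hS hT i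
      _ ≤ overshoot θ (x S) i := sub_le_self _ (overshoot_nonneg _ _ i)
      _ ≤ _ := Finset.single_le_sum (fun k _ => hnonneg k) (Finset.mem_univ i)
  have hj := hK _ (Finset.sum_nonneg fun k _ => hnonneg k) _ hLle j
  rwa [h.cumulativeExcess_eq_zero hg hS hT hroot, zero_add] at hj

theorem eventually_lt_of_eventually_root_le (hL : IsGraphLaplacian L) {r : ι}
    (hr : IsLaplacianRoot L r) (hg : StrictMono g) (h : IsFilippovSolution L g x0 x γ) {θ b : ℝ}
    (hθb : θ < b) (hroot : ∀ᶠ t in atTop, x t r ≤ θ) (j : ι) : ∀ᶠ t in atTop, x t j < b := by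
  obtain ⟨S, hrootS⟩ := eventually_atTop.mp (hroot.and (eventually_ge_atTop 0))
  obtain ⟨C, hC⟩ := h.exists_cumulativeExcess_le hL hr hg.monotone (hrootS S le_rfl).2
    fun t ht => (hrootS t ht).1
  obtain ⟨θ', hθθ', hθ'b⟩ := exists_between hθb
  obtain ⟨d, hd, hwindow⟩ :=
    h.exists_forall_mem_Icc_abs_sub_lt hL hr hg.monotone (sub_pos.mpr hθ'b)
  filter_upwards [eventually_ge_atTop 0, eventually_not_ae_le_of_integral_bounded
    (locallyIntegrable_apply (h.locallyIntegrable_overshoot (rightLim g θ)) j)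
    (fun _ => overshoot_nonneg _ _ j) (fun T hT => hC T hT j) hd
    (sub_pos.mpr (rightLim_lt_leftLim_of_strictMono hg hθθ'))] with t ht hnot
  by_contra! hj
  refine hnot ?_
  filter_upwards [h.ae_sub_le_overshoot hg.monotone θ θ'] with s hs hst
  refine hs (ht.trans hst.1) j ?_
  linarith [(abs_lt.mp (hwindow t ht s hst j)).1]

theorem exists_blockedExcess_le (hL : IsGraphLaplacian L) (hg : Monotone g)
    (h : IsFilippovSolution L g x0 x γ) {η : ι → ℝ} (hη0 : 0 ≤ η) (hη : η ᵥ* L = 0) {i j : ι}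
    (hij : LaplacianEdge L j i) (hi : 0 < η i) (θ : ℝ) :
    ∃ C, ∀ T, 0 ≤ T → blockedExcess g x γ θ 0 T i j ≤ C := by
  classical
  refine ⟨η ⬝ᵥ overshoot θ x0 / (η i * -L i j), fun T hT => ?_⟩
  rw [le_div_iff₀ (mul_pos hi (neg_pos.mpr hij.2))]
  have hslack : L *ᵥ cumulativeExcess g γ θ 0 T +
      Pi.single i (-L i j * blockedExcess g x γ θ 0 T i j) ≤ overshoot θ x0 := fun k => by
    have hnonneg := overshoot_nonneg θ (x T) k
    rw [Pi.zero_apply] at hnonneg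
    rw [← h.apply_zero, Pi.add_apply]
    rcases eq_or_ne k i with rfl | hki
    · rw [Pi.single_eq_same]
      linarith [h.mulVec_cumulativeExcess_sub_le hL hg θ le_rfl hT k j]
    · rw [Pi.single_eq_of_ne hki]
      linarith [h.mulVec_cumulativeExcess_le hL hg θ le_rfl hT k]
  calc blockedExcess g x γ θ 0 T i j * (η i * -L i j)
      = η ⬝ᵥ (L *ᵥ cumulativeExcess g γ θ 0 T +
          Pi.single i (-L i j * blockedExcess g x γ θ 0 T i j)) := by
        rw [dotProduct_add, dotProduct_mulVec, hη, zero_dotProduct, dotProduct_single]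
        ring
    _ ≤ η ⬝ᵥ overshoot θ x0 := dotProduct_le_dotProduct_of_nonneg_left hslack hη0

theorem eventually_not_separated (hL : IsGraphLaplacian L) {r : ι} (hr : IsLaplacianRoot L r)
    (hg : StrictMono g) (h : IsFilippovSolution L g x0 x γ) {η : ι → ℝ} (hη0 : 0 ≤ η)
    (hη : η ᵥ* L = 0) {i j : ι} (hij : LaplacianEdge L j i) (hi : 0 < η i) {a b : ℝ}
    (hab : a < b) : ∀ᶠ t in atTop, ¬ (x t i ≤ a ∧ b ≤ x t j) := by
  obtain ⟨θ, haθ, hθb⟩ := exists_between hab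
  obtain ⟨θ', hθθ', hθ'b⟩ := exists_between hθb
  obtain ⟨C, hC⟩ := h.exists_blockedExcess_le hL hg.monotone hη0 hη hij hi θ
  obtain ⟨d, hd, hwindow⟩ := h.exists_forall_mem_Icc_abs_sub_lt hL hr hg.monotone
    (lt_min (sub_pos.mpr haθ) (sub_pos.mpr hθ'b))
  filter_upwards [eventually_ge_atTop 0, eventually_not_ae_le_of_integral_bounded
    (h.locallyIntegrable_indicator_overshoot θ (rightLim g θ) i j)
    (fun _ => indicator_nonneg (fun _ _ => overshoot_nonneg _ _ j) _) hC hd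
    (sub_pos.mpr (rightLim_lt_leftLim_of_strictMono hg hθθ'))] with t ht hnot
  rintro ⟨hia, hjb⟩
  refine hnot ?_
  filter_upwards [h.ae_sub_le_overshoot hg.monotone θ θ'] with s hs hst
  have hiθ : x s i ≤ θ := by
    linarith [(abs_lt.mp ((hwindow t ht s hst i).trans_le (min_le_left _ _))).2]
  have hjθ' : θ' ≤ x s j := by
    linarith [(abs_lt.mp ((hwindow t ht s hst j).trans_le (min_le_right _ _))).1]
  rw [indicator_of_mem (by exact hiθ)]
  exact hs (ht.trans hst.1) j hjθ'

theorem eventually_lt_add_of_edge (hL : IsGraphLaplacian L) {r : ι} (hr : IsLaplacianRoot L r)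
    (hg : StrictMono g) (h : IsFilippovSolution L g x0 x γ) {η : ι → ℝ} (hη0 : 0 ≤ η)
    (hη : η ᵥ* L = 0) {i j : ι} (hij : LaplacianEdge L j i) (hi : 0 < η i) {ε : ℝ}
    (hε : 0 < ε) : ∀ᶠ t in atTop, x t j < x t i + ε := by
  refine eventually_lt_add_of_forall_eventually_not_separated
    (isCompact_Icc (a := -‖x0‖) (b := ‖x0‖)) ?_
    (fun a b hab => h.eventually_not_separated hL hr hg hη0 hη hij hi hab) hε
  filter_upwards [eventually_ge_atTop 0] with t ht
  exact h.apply_mem_Icc_norm hL hr hg.monotone ht i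

theorem tendsto_sub_of_edge (hL : IsGraphLaplacian L) {r : ι} (hr : IsLaplacianRoot L r)
    (hg : StrictMono g) (h : IsFilippovSolution L g x0 x γ) {η : ι → ℝ} (hη0 : 0 ≤ η)
    (hη : η ᵥ* L = 0) {i j : ι} (hij : LaplacianEdge L j i) (hi : 0 < η i) :
    Tendsto (fun t => x t i - x t j) atTop (𝓝 0) := by
  refine Metric.tendsto_nhds.mpr fun ε hε => ?_
  filter_upwards [h.eventually_lt_add_of_edge hL hr hg hη0 hη hij hi hε,
    (h.neg hg.monotone).eventually_lt_add_of_edge hL hr (strictMono_neg_comp_neg hg) hη0 hη hij hi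
      hε] with t hupper hlower
  simp only [Pi.neg_apply] at hlower
  rw [dist_zero_right, Real.norm_eq_abs, abs_lt]
  constructor <;> linarith

theorem tendsto_sub_of_reflTransGen (hL : IsGraphLaplacian L) {r : ι} (hr : IsLaplacianRoot L r)
    (hg : StrictMono g) (h : IsFilippovSolution L g x0 x γ) {η : ι → ℝ} (hη0 : 0 ≤ η)
    (hη : η ᵥ* L = 0) {a w : ι} (haw : Relation.ReflTransGen (LaplacianEdge L) a w)
    (hw : 0 < η w) : Tendsto (fun t => x t w - x t a) atTop (𝓝 0) := by
  induction haw using Relation.ReflTransGen.head_induction_on with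
  | refl => simp
  | @head a b hab hbw ih =>
    have hb : 0 < η b := hL.pos_of_reflTransGen_of_vecMul_eq_zero hη0 hη hbw hw
    simpa only [sub_add_sub_cancel, add_zero] using
      ih.add (h.tendsto_sub_of_edge hL hr hg hη0 hη hab hb)

theorem tendsto_root (hL : IsGraphLaplacian L) {r : ι} (hr : IsLaplacianRoot L r)
    (hg : StrictMono g) (h : IsFilippovSolution L g x0 x γ) {ξ : ι → ℝ} (hξ : ξ ᵥ* L = 0)
    (hξ1 : ∑ i, ξ i = 1) : Tendsto (fun t => x t r) atTop (𝓝 (ξ ⬝ᵥ x0)) := by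
  have hterm : ∀ i, Tendsto (fun t => ξ i * (x t i - x t r)) atTop (𝓝 0) := fun i => by
    rcases eq_or_ne (ξ i) 0 with hi | hi
    · simp [hi]
    · simpa only [mul_zero] using (h.tendsto_sub_of_reflTransGen hL hr hg (abs_nonneg ξ)
        (hL.vecMul_abs_eq_zero hξ) (hr i) (abs_pos.mpr hi)).const_mul (ξ i)
  have hsum := (tendsto_finsetSum Finset.univ fun i _ => hterm i).const_sub (ξ ⬝ᵥ x0)
  rw [Finset.sum_const_zero, sub_zero] at hsum
  refine hsum.congr' ?_
  filter_upwards [eventually_ge_atTop 0] with t ht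
  simp only [mul_sub, Finset.sum_sub_distrib, ← Finset.sum_mul, hξ1, one_mul]
  rw [← h.dotProduct_eq hξ ht]
  exact sub_sub_cancel _ _

theorem eventually_lt_of_tendsto_root (hL : IsGraphLaplacian L) {r : ι} (hr : IsLaplacianRoot L r)
    (hg : StrictMono g) (h : IsFilippovSolution L g x0 x γ) {c b : ℝ}
    (hc : Tendsto (fun t => x t r) atTop (𝓝 c)) (hcb : c < b) (j : ι) :
    ∀ᶠ t in atTop, x t j < b := by
  obtain ⟨θ, hcθ, hθb⟩ := exists_between hcb
  exact h.eventually_lt_of_eventually_root_le hL hr hg hθb (hc.eventually_le_const hcθ) j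

theorem tendsto_of_tendsto_root (hL : IsGraphLaplacian L) {r : ι} (hr : IsLaplacianRoot L r)
    (hg : StrictMono g) (h : IsFilippovSolution L g x0 x γ) {c : ℝ}
    (hc : Tendsto (fun t => x t r) atTop (𝓝 c)) (j : ι) :
    Tendsto (fun t => x t j) atTop (𝓝 c) := by
  refine tendsto_order.mpr ⟨fun a hac => ?_, fun b hcb =>
    h.eventually_lt_of_tendsto_root hL hr hg hc hcb j⟩
  filter_upwards [(h.neg hg.monotone).eventually_lt_of_tendsto_root hL hr
    (strictMono_neg_comp_neg hg) hc.neg (neg_lt_neg hac) j] with t ht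
  exact neg_lt_neg_iff.mp ht

end IsFilippovSolution

end Filippov

theorem consensus_of_spanning_tree_general {ι : Type*} [Fintype ι] {L : Matrix ι ι ℝ}
    (hL : IsGraphLaplacian L) (hroot : ∃ r, IsLaplacianRoot L r) {g : ℝ → ℝ} (hg : StrictMono g)
    {ξ : ι → ℝ} (hξ : ξ ᵥ* L = 0) (hξ1 : ∑ i, ξ i = 1) {x0 : ι → ℝ} {x γ : ℝ → ι → ℝ}
    (h : IsFilippovSolution L g x0 x γ) (i : ι) :
    Tendsto (fun t => x t i) atTop (𝓝 (ξ ⬝ᵥ x0)) := by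
  obtain ⟨r, hr⟩ := hroot
  exact h.tendsto_of_tendsto_root hL hr hg (h.tendsto_root hL hr hg hξ hξ1) i

/-- sufficiency part of Theorem 1: If `G(L)` has a spanning tree,
`g` is strictly increasing with only finitely many discontinuity points in every
bounded interval, and `ξ` is a normalized left null vector of `L`, then every Filippov
solution of `ẋ_i = -∑_j L i j g(x_j)` with initial value `x0` achieves consensus at the
value `∑ i, ξ i * x0 i`. -/
theorem consensus_of_spanning_tree
    (n : ℕ) (L : Matrix (Fin n) (Fin n) ℝ)
    (hL1 : ∀ i j, i ≠ j → L i j ≤ 0) (hL2 : ∀ i, ∑ j, L i j = 0)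
    (hroot : ∃ r : Fin n, ∀ w : Fin n,
      Relation.ReflTransGen (fun a b => a ≠ b ∧ L b a < 0) r w)
    (g : ℝ → ℝ) (hg : StrictMono g)
    (hgfin : ∀ a b : ℝ, {z : ℝ | z ∈ Set.Icc a b ∧ ¬ ContinuousAt g z}.Finite)
    (ξ : Fin n → ℝ) (hξ : ∀ j, ∑ i, ξ i * L i j = 0) (hξ1 : ∑ i, ξ i = 1)
    (x0 : Fin n → ℝ) (x γ : ℝ → Fin n → ℝ)
    (hxcont : Continuous x) (hγmeas : Measurable γ)
    (hγint : LocallyIntegrable γ volume)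
    (hγK : ∀ᵐ t ∂volume, 0 ≤ t →
      ∀ j, γ t j ∈ Set.Icc (leftLim g (x t j)) (rightLim g (x t j)))
    (hsol : ∀ t, 0 ≤ t → ∀ i,
      x t i = x0 i - ∫ s in (0:ℝ)..t, ∑ j, L i j * γ s j) :
    ∀ i, Tendsto (fun t => x t i) atTop (nhds (∑ i, ξ i * x0 i)) := by
  exact consensus_of_spanning_tree_general ⟨hL1, hL2⟩ hroot hg (funext hξ) hξ1
    ⟨hxcont, hγint, hγK, hsol⟩
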